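/- Let x̄ ∈ ℝ, σ > 0 and t > 0, and let P_t : ℝ → ℝ be defined by P_t(x) = t·sgn(x) if |x| > t and P_t(x) = x if |x| ≤ t. Set a₁ = (t + x̄)/(√2·σ) and a₂ = (t − x̄)/(√2·σ). Then (1/(√(2π)·σ)) ∫_{−∞}^{∞} P_t(x) · exp(−(x − x̄)²/(2σ²)) dx = (1/2)·√(2/π)·σ·(exp(−a₁²) − exp(−a₂²)) + (x̄/2 + t/2)·erf(a₁) + (x̄/2 − t/2)·erf(a₂), where erf(z) = (2/√π) ∫₀^z exp(−t²) dt. -/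

import Mathlib

open MeasureTheory

/-- The error function `erf(z) = (2/√π) ∫₀^z exp(−t²) dt`. -/
noncomputable def erf (z : ℝ) : ℝ :=
  (2 / Real.sqrt Real.pi) * ∫ t in (0:ℝ)..z, Real.exp (-t ^ 2)

/-- The clipping function `P_t(x) = t·sgn(x)` if `|x| > t`, `P_t(x) = x` if `|x| ≤ t`. -/
noncomputable def clip (t x : ℝ) : ℝ := if |x| ≤ t then x else t * Real.sign x

lemma aux_Ioi (a : ℝ) : ∫ u in Set.Ioi a, Real.exp (-u ^ 2) =
    Real.sqrt Real.pi / 2 - ∫ u in (0:ℝ)..a, Real.exp (-u ^ 2) := by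
  have hi : Integrable (fun u : ℝ => Real.exp (-u ^ 2)) := by
    simpa using integrable_exp_neg_mul_sq (b := 1) one_pos
  have h0 : ∫ u in Set.Ioi (0:ℝ), Real.exp (-u ^ 2) = Real.sqrt Real.pi / 2 := by
    simpa using integral_gaussian_Ioi 1
  have := intervalIntegral.integral_interval_add_Ioi (a := 0) (b := a) (μ := volume)
    (f := fun u : ℝ => Real.exp (-u ^ 2)) hi.integrableOn hi.integrableOn
  linarith

lemma aux_mid (p q c s : ℝ) : ∫ u in p..q, (c + s * u) * Real.exp (-u ^ 2) =
    c * ((∫ u in (0:ℝ)..q, Real.exp (-u ^ 2)) - ∫ u in (0:ℝ)..p, Real.exp (-u ^ 2)) +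
      s / 2 * (Real.exp (-p ^ 2) - Real.exp (-q ^ 2)) := by
  have hc : Continuous (fun u : ℝ => Real.exp (-u ^ 2)) := by fun_prop
  have h : ∀ u ∈ Set.uIcc p q, HasDerivAt (fun u : ℝ => c * (∫ v in (0:ℝ)..u, Real.exp (-v ^ 2))
      - s / 2 * Real.exp (-u ^ 2)) ((c + s * u) * Real.exp (-u ^ 2)) u := by
    intro u _
    have h1 := (hc.integral_hasStrictDerivAt 0 u).hasDerivAt
    have h2 : HasDerivAt (fun u : ℝ => Real.exp (-u ^ 2)) (Real.exp (-u ^ 2) * (-(2 * u))) u := by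
      have := ((hasDerivAt_pow 2 u).fun_neg).exp
      simpa using this
    refine ((h1.const_mul c).fun_sub (h2.const_mul (s / 2))).congr_deriv ?_
    ring
  rw [intervalIntegral.integral_eq_sub_of_hasDerivAt h]
  · ring
  · apply Continuous.intervalIntegrable
    fun_prop

lemma F_neg (a : ℝ) : ∫ u in (0:ℝ)..(-a), Real.exp (-u ^ 2) =
    - ∫ u in (0:ℝ)..a, Real.exp (-u ^ 2) := by
  have := intervalIntegral.integral_comp_neg (a := 0) (b := a) (fun u : ℝ => Real.exp (-u ^ 2))
  simp only [neg_zero, even_two, Even.neg_pow] at this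
  rw [this, intervalIntegral.integral_symm]

lemma aux_Iic (a : ℝ) : ∫ u in Set.Iic (-a), Real.exp (-u ^ 2) =
    Real.sqrt Real.pi / 2 - ∫ u in (0:ℝ)..a, Real.exp (-u ^ 2) := by
  rw [← aux_Ioi]
  have := integral_comp_neg_Iic (-a) (fun u : ℝ => Real.exp (-u ^ 2))
  simpa using this

/-- the Gaussian mean of `P_t(x)`, with `a₁ = (t + x̄)/(√2σ)` and
`a₂ = (t − x̄)/(√2σ)`, equals
`½√(2/π)σ(e^{−a₁²} − e^{−a₂²}) + (x̄/2 + t/2)erf(a₁) + (x̄/2 − t/2)erf(a₂)`. -/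
theorem gaussian_mean_clip (xbar σ t : ℝ) (hσ : 0 < σ) (ht : 0 < t)
    (a₁ a₂ : ℝ) (ha₁ : a₁ = (t + xbar) / (Real.sqrt 2 * σ))
    (ha₂ : a₂ = (t - xbar) / (Real.sqrt 2 * σ)) :
    (1 / (Real.sqrt (2 * Real.pi) * σ)) *
        ∫ x : ℝ, clip t x * Real.exp (-(x - xbar) ^ 2 / (2 * σ ^ 2)) =
      (1 / 2) * Real.sqrt (2 / Real.pi) * σ *
          (Real.exp (-a₁ ^ 2) - Real.exp (-a₂ ^ 2)) +
        (xbar / 2 + t / 2) * erf a₁ + (xbar / 2 - t / 2) * erf a₂ := by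
  have h2 : (0:ℝ) < Real.sqrt 2 := by positivity
  have h22 : Real.sqrt 2 ^ 2 = 2 := Real.sq_sqrt (by norm_num)
  have hpi : 0 < Real.sqrt Real.pi := Real.sqrt_pos.2 Real.pi_pos
  obtain ⟨s, hs⟩ : ∃ s, s = Real.sqrt 2 * σ := ⟨_, rfl⟩
  have hs0 : 0 < s := by rw [hs]; positivity
  have hs2 : s ^ 2 = 2 * σ ^ 2 := by rw [hs, mul_pow, h22]
  rw [← hs] at ha₁ ha₂
  have e1 : s * a₁ = t + xbar := by rw [ha₁]; field_simp
  have e2 : s * a₂ = t - xbar := by rw [ha₂]; field_simp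
  have hle : -a₁ ≤ a₂ := by nlinarith
  have hi : Integrable (fun u : ℝ => Real.exp (-u ^ 2)) := by
    simpa using integrable_exp_neg_mul_sq (b := 1) one_pos
  have hsub : ∫ x : ℝ, clip t x * Real.exp (-(x - xbar) ^ 2 / (2 * σ ^ 2)) =
      s * ∫ u : ℝ, clip t (xbar + s * u) * Real.exp (-u ^ 2) := by
    have := Measure.integral_comp_mul_left
      (fun y : ℝ => clip t (xbar + y) * Real.exp (-y ^ 2 / (2 * σ ^ 2))) s
    have h3 := integral_add_left_eq_self (μ := volume)
      (fun x : ℝ => clip t x * Real.exp (-(x - xbar) ^ 2 / (2 * σ ^ 2))) xbar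
    simp only [add_sub_cancel_left] at h3
    rw [h3] at this
    have h4 : ∀ u : ℝ, -(s * u) ^ 2 / (2 * σ ^ 2) = -u ^ 2 := by
      intro u
      rw [mul_pow, ← hs2]; field_simp
    simp only [h4] at this
    rw [this, abs_of_pos (inv_pos.2 hs0), smul_eq_mul]
    field_simp
  have cl : ∀ u ∈ Set.Iio (-a₁), clip t (xbar + s * u) * Real.exp (-u ^ 2)
      = (-t) * Real.exp (-u ^ 2) := by
    intro u hu
    have hu' : u < -a₁ := hu
    have : xbar + s * u < -t := by nlinarith
    rw [clip, if_neg, Real.sign_of_neg (by linarith)]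
    · ring
    · rw [abs_le]; intro h; linarith [h.1]
  have cm : ∀ u ∈ Set.Ioo (-a₁) a₂, clip t (xbar + s * u) * Real.exp (-u ^ 2)
      = (xbar + s * u) * Real.exp (-u ^ 2) := by
    intro u hu
    have := hu.1
    have := hu.2
    rw [clip, if_pos]
    rw [abs_le]
    constructor <;> nlinarith
  have cr : ∀ u ∈ Set.Ioi a₂, clip t (xbar + s * u) * Real.exp (-u ^ 2)
      = t * Real.exp (-u ^ 2) := by
    intro u hu
    have hu' : a₂ < u := hu
    have : t < xbar + s * u := by nlinarith
    rw [clip, if_neg, Real.sign_of_pos (by linarith)]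
    · ring
    · rw [abs_le]; intro h; linarith [h.2]
  have il : IntegrableOn (fun u => clip t (xbar + s * u) * Real.exp (-u ^ 2)) (Set.Iic (-a₁)) := by
    rw [integrableOn_Iic_iff_integrableOn_Iio]
    exact (integrableOn_congr_fun cl measurableSet_Iio).2 (hi.const_mul _).integrableOn
  have ir : IntegrableOn (fun u => clip t (xbar + s * u) * Real.exp (-u ^ 2)) (Set.Ioi a₂) :=
    (integrableOn_congr_fun cr measurableSet_Ioi).2 (hi.const_mul _).integrableOn
  have im : IntegrableOn (fun u => clip t (xbar + s * u) * Real.exp (-u ^ 2))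
      (Set.Ioc (-a₁) a₂) := by
    rw [integrableOn_Ioc_iff_integrableOn_Ioo]
    refine (integrableOn_congr_fun cm measurableSet_Ioo).2 ?_
    refine IntegrableOn.mono_set (t := Set.Icc (-a₁) a₂) ?_ Set.Ioo_subset_Icc_self
    apply Continuous.integrableOn_Icc
    fun_prop
  have imr : IntegrableOn (fun u => clip t (xbar + s * u) * Real.exp (-u ^ 2))
      (Set.Ioi (-a₁)) := by
    rw [← Set.Ioc_union_Ioi_eq_Ioi hle]
    exact im.union ir
  have tot : ∫ u : ℝ, clip t (xbar + s * u) * Real.exp (-u ^ 2) =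
      (-t) * (Real.sqrt Real.pi / 2 - ∫ u in (0:ℝ)..a₁, Real.exp (-u ^ 2)) +
      ((xbar * ((∫ u in (0:ℝ)..a₂, Real.exp (-u ^ 2)) + ∫ u in (0:ℝ)..a₁, Real.exp (-u ^ 2)) +
      s / 2 * (Real.exp (-a₁ ^ 2) - Real.exp (-a₂ ^ 2))) +
      t * (Real.sqrt Real.pi / 2 - ∫ u in (0:ℝ)..a₂, Real.exp (-u ^ 2))) := by
    rw [← intervalIntegral.integral_Iic_add_Ioi il imr, ← Set.Ioc_union_Ioi_eq_Ioi hle,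
      setIntegral_union (Set.Ioc_disjoint_Ioi le_rfl) measurableSet_Ioi im ir]
    congr 1
    · rw [integral_Iic_eq_integral_Iio, setIntegral_congr_fun measurableSet_Iio cl,
        integral_const_mul, ← integral_Iic_eq_integral_Iio, aux_Iic]
    congr 1
    · rw [integral_Ioc_eq_integral_Ioo, setIntegral_congr_fun measurableSet_Ioo cm,
        ← integral_Ioc_eq_integral_Ioo, ← intervalIntegral.integral_of_le hle, aux_mid, F_neg,
        neg_sq]
      ring
    · rw [setIntegral_congr_fun measurableSet_Ioi cr, integral_const_mul, aux_Ioi]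
  rw [hsub, tot, erf, erf, Real.sqrt_mul (by norm_num), Real.sqrt_div (by norm_num), hs]
  field_simp
  ring
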